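/- The space (ℝ², d*) is distance convex: for all x, y, z ∈ ℝ² and every midpoint m of x and y (that is, every m ∈ ℝ² with d*(x,m) = d*(m,y) = d*(x,y)/2), one has d*(m, z) ≤ (1/2)·(d*(x,z) + d*(y,z)). -/

import Mathlib

/-- The river metric on ℝ². -/
noncomputable def riverDist (u v : ℝ × ℝ) : ℝ :=
  if u.1 = v.1 then |u.2 - v.2| else |u.2| + |v.2| + |u.1 - v.1|

/-- The metric segment between two points of ℝ² with the river metric. -/
def riverSegment (u v : ℝ × ℝ) : Set (ℝ × ℝ) :=
  {z | riverDist u z + riverDist z v = riverDist u v}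

/-- A set is convex (w.r.t. the river metric) if it contains all metric segments
between its points. -/
def IsRiverConvex (K : Set (ℝ × ℝ)) : Prop :=
  ∀ u ∈ K, ∀ v ∈ K, riverSegment u v ⊆ K

/-- `m` is a midpoint of `u` and `v` for the river metric. -/
def IsRiverMidpoint (u v m : ℝ × ℝ) : Prop :=
  riverDist u m = riverDist u v / 2 ∧ riverDist m v = riverDist u v / 2

theorem line_four (a b c d : ℝ) :
    |a - b| + |c - d| ≤ |a - c| + |b - d| ∨ |a - b| + |c - d| ≤ |b - c| + |a - d| := by
  rcases le_total a b with h1 | h1 <;> rcases le_total c d with h2 | h2 <;>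
  rcases le_total a c with h3 | h3 <;> rcases le_total b d with h4 | h4 <;>
  first
    | (left; cases abs_cases (a - b) <;> cases abs_cases (c - d) <;>
        cases abs_cases (a - c) <;> cases abs_cases (b - d) <;> linarith)
    | (right; cases abs_cases (a - b) <;> cases abs_cases (c - d) <;>
        cases abs_cases (b - c) <;> cases abs_cases (a - d) <;> linarith)

theorem rd_comm (u v : ℝ × ℝ) : riverDist u v = riverDist v u := by
  unfold riverDist
  rw [abs_sub_comm u.2, abs_sub_comm u.1]
  simp only [eq_comm (a := u.1), add_comm |u.2|]

theorem rd_tri (u v w : ℝ × ℝ) : riverDist u w ≤ riverDist u v + riverDist v w := by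
  obtain ⟨u1, u2⟩ := u
  obtain ⟨v1, v2⟩ := v
  obtain ⟨w1, w2⟩ := w
  have a1 := abs_sub_le u1 v1 w1
  have a2 := abs_sub_le u2 v2 w2
  have b1 := abs_sub u2 w2
  have b2 := abs_sub_abs_le_abs_sub u2 v2
  have b3 := abs_sub_abs_le_abs_sub w2 v2
  rw [abs_sub_comm w2] at b3
  have p1 := abs_nonneg v2
  have p2 := abs_nonneg (u1 - v1)
  have p3 := abs_nonneg (v1 - w1)
  simp only [riverDist]
  split_ifs <;> subst_vars <;> first
    | linarith
    | (exfalso; simp_all; done)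

theorem rd_four (x y m z : ℝ × ℝ) :
    riverDist x y + riverDist m z ≤ riverDist x m + riverDist y z ∨
    riverDist x y + riverDist m z ≤ riverDist y m + riverDist x z := by
  obtain ⟨x1, x2⟩ := x
  obtain ⟨y1, y2⟩ := y
  obtain ⟨m1, m2⟩ := m
  obtain ⟨z1, z2⟩ := z
  have f1 := line_four x1 y1 m1 z1
  have f2 := line_four x2 y2 m2 z2
  have g1 := line_four 0 y2 m2 z2
  have g2 := line_four x2 0 m2 z2
  have g3 := line_four x2 y2 0 z2
  have g4 := line_four x2 y2 m2 0
  simp only [zero_sub, sub_zero, abs_neg] at g1 g2 g3 g4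
  have b1 := abs_sub x2 y2
  have b2 := abs_sub m2 z2
  have p1 := abs_nonneg (x1 - y1)
  have p2 := abs_nonneg (m1 - z1)
  have q1 := abs_sub_comm x1 y1
  have q2 := abs_sub_comm x1 m1
  have q3 := abs_sub_comm x1 z1
  have q4 := abs_sub_comm y1 m1
  have q5 := abs_sub_comm y1 z1
  have q6 := abs_sub_comm m1 z1
  by_contra hc
  rw [not_or, not_le, not_le] at hc
  obtain ⟨c1, c2⟩ := hc
  simp only [riverDist] at c1 c2
  split_ifs at c1 c2 <;> subst_vars <;> first
    | linarith
    | contradiction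
    | (rcases f1 with h | h <;> linarith)
    | (rcases f2 with h | h <;> linarith)
    | (rcases g1 with h | h <;> linarith)
    | (rcases g2 with h | h <;> linarith)
    | (rcases g3 with h | h <;> linarith)
    | (rcases g4 with h | h <;> linarith)

/-- (ℝ², d*) is distance convex. -/
theorem river_distance_convex :
    ∀ x y z m : ℝ × ℝ, IsRiverMidpoint x y m →
      riverDist m z ≤ (1 / 2) * (riverDist x z + riverDist y z) := by
  intro x y z m ⟨h1, h2⟩
  have t1 := rd_tri y x z
  have t2 := rd_tri x y z
  have c1 := rd_comm x y
  have c2 := rd_comm m y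
  rcases rd_four x y m z with h | h <;> linarith
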